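/- Let (X,d) be a compact θ-metric space. Then for every p∈[1,∞), the Wasserstein space (P(X),W_p) is a compact θ-metric space with diam(P(X),W_p) = diam(X,d), and the map x ↦ δ_x is an isometric embedding of (X,d) into (P(X),W_p). -/

import Mathlib

open Set Filter Topology

variable {X : Type*}

/-- Forward ball of an (possibly asymmetric) distance function. -/
def fwdBall (d : X → X → ℝ) (x : X) (r : ℝ) : Set X := {y | d x y < r}

/-- Backward ball. -/
def bwdBall (d : X → X → ℝ) (x : X) (r : ℝ) : Set X := {y | d y x < r}

/-- The forward topology, generated by forward balls. -/
def fwdTop (d : X → X → ℝ) : TopologicalSpace X :=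
  TopologicalSpace.generateFrom {s | ∃ x r, s = fwdBall d x r}

/-- The backward topology, generated by backward balls. -/
def bwdTop (d : X → X → ℝ) : TopologicalSpace X :=
  TopologicalSpace.generateFrom {s | ∃ x r, s = bwdBall d x r}

/-- `d` is an irreversible metric: nonnegative, vanishing exactly on the diagonal, and
satisfying the triangle inequality (symmetry is not required). -/
def IsIrrevMetric (d : X → X → ℝ) : Prop :=
  (∀ x y, 0 ≤ d x y) ∧ (∀ x y, d x y = 0 ↔ x = y) ∧ ∀ x y z, d x z ≤ d x y + d y z

/-- `(X, star, d)` is a pointed forward `Θ`-metric space: `Θ` is nondecreasing with values ≥ 1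
and the reversibility of the closure (in the forward topology) of each forward ball of radius
`r > 0` about `star` is bounded by `Θ r`. -/
def PointedForwardTheta (d : X → X → ℝ) (star : X) (Θ : ℝ → ℝ) : Prop :=
  Monotone Θ ∧ (∀ r, 1 ≤ Θ r) ∧
  ∀ r > 0, ∀ x ∈ @closure X (fwdTop d) (fwdBall d star r),
    ∀ y ∈ @closure X (fwdTop d) (fwdBall d star r), d x y ≤ Θ r * d y x
open MeasureTheory
open scoped ENNReal

/-- The total transport cost of a plan `π` for the cost `d(x,y)^p` (the directed distance). -/
noncomputable def transportCost [MeasurableSpace X] (d : X → X → ℝ) (p : ℝ)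
    (π : Measure (X × X)) : ℝ≥0∞ :=
  ∫⁻ z, ENNReal.ofReal (d z.1 z.2) ^ p ∂π

/-- `π` is a coupling (transference plan) from `μ` to `ν`. -/
def IsCoupling [MeasurableSpace X] (π : Measure (X × X)) (μ ν : Measure X) : Prop :=
  π.map Prod.fst = μ ∧ π.map Prod.snd = ν

/-- The (possibly asymmetric) `p`-Wasserstein distance from `μ` to `ν`. -/
noncomputable def wassDist [MeasurableSpace X] (d : X → X → ℝ) (p : ℝ)
    (μ ν : Measure X) : ℝ≥0∞ :=
  (⨅ π : {π : Measure (X × X) // IsCoupling π μ ν}, transportCost d p π.1) ^ (1 / p)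

section Aux

variable {Y : Type*} [MetricSpace Y] [CompactSpace Y] [MeasurableSpace Y] [BorelSpace Y]

lemma aux_partition (μ : Measure Y) [IsFiniteMeasure μ] {ε : ℝ} (hε : 0 < ε) :
    ∃ (n : ℕ) (A : Fin n → Set Y), (∀ i, MeasurableSet (A i)) ∧
      Pairwise (Function.onFun Disjoint A) ∧ (⋃ i, A i) = univ ∧
      (∀ i, ∀ x ∈ A i, ∀ y ∈ A i, dist x y < ε) ∧ ∀ i, μ (frontier (A i)) = 0 := by
  have h1 : ∀ x : Y, ∃ r ∈ Ioo (0:ℝ) (ε / 2), μ (frontier (Metric.thickening r {x})) = 0 :=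
    fun x => exists_null_frontier_thickening μ {x} (by positivity)
  choose r hr hr0 using h1
  obtain ⟨t, ht⟩ := isCompact_univ.elim_nhds_subcover (fun x : Y => Metric.ball x (r x))
    (fun x _ => Metric.ball_mem_nhds x (hr x).1)
  let c : Fin t.card → Y := fun i => (t.equivFin.symm i : Y)
  let f : Fin t.card → Set Y := fun i => Metric.ball (c i) (r (c i))
  have hf0 : ∀ i, μ (frontier (f i)) = 0 := by
    intro i
    have := hr0 (c i)
    rwa [Metric.thickening_singleton] at this
  refine ⟨t.card, disjointed f, fun i => ?_, disjoint_disjointed f, ?_, ?_, fun i => ?_⟩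
  · exact disjointedRec (p := MeasurableSet) (fun s j hs => hs.diff Metric.isOpen_ball.measurableSet)
      Metric.isOpen_ball.measurableSet
  · rw [iUnion_disjointed]
    refine eq_univ_of_univ_subset (ht.2.trans ?_)
    intro x hx
    simp only [mem_iUnion] at hx ⊢
    obtain ⟨y, hy, hx⟩ := hx
    exact ⟨t.equivFin ⟨y, hy⟩, by simpa [f, c] using hx⟩
  · intro i x hx y hy
    have hx := disjointed_subset f i hx
    have hy := disjointed_subset f i hy
    simp only [f, Metric.mem_ball] at hx hy
    have := dist_triangle_right x y (c i)
    have := (hr (c i)).2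
    linarith
  · refine disjointedRec (p := fun s => μ (frontier s) = 0) (fun s j hs => ?_) (hf0 i)
    rw [diff_eq]
    refine measure_mono_null ((frontier_inter_subset _ _).trans
      (union_subset_union inter_subset_left inter_subset_right)) ?_
    rw [frontier_compl]
    exact measure_union_null hs (hf0 j)

variable {d : Y → Y → ℝ} {p : ℝ}

lemma aux_meas (hc : Continuous fun z : Y × Y => d z.1 z.2) :
    Measurable fun z : Y × Y => ENNReal.ofReal (d z.1 z.2) ^ p :=
  (hc.measurable.ennreal_ofReal).pow_const p

/-- coupling of two finite measures of equal mass -/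
lemma aux_prod (α β : Measure Y) [IsFiniteMeasure α] [IsFiniteMeasure β] (h : α univ = β univ) :
    IsCoupling ((α univ)⁻¹ • α.prod β) α β := by
  by_cases h0 : α univ = 0
  · have ha : α = 0 := Measure.measure_univ_eq_zero.1 h0
    have hb : β = 0 := Measure.measure_univ_eq_zero.1 (h ▸ h0)
    subst ha hb
    simp [IsCoupling]
  · constructor
    · rw [Measure.map_smul, Measure.map_fst_prod, ← h, smul_smul,
        ENNReal.inv_mul_cancel h0 (measure_ne_top _ _), one_smul]
    · rw [Measure.map_smul, Measure.map_snd_prod, smul_smul,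
        ENNReal.inv_mul_cancel h0 (measure_ne_top _ _), one_smul]

lemma aux_coupling_univ {π : Measure (Y × Y)} {α β : Measure Y} (h : IsCoupling π α β) :
    π univ = α univ := by
  rw [← h.1, Measure.map_apply measurable_fst MeasurableSet.univ, preimage_univ]

lemma aux_wle {π : Measure (Y × Y)} {α β : Measure Y} (h : IsCoupling π α β) (hp : 1 ≤ p) :
    wassDist d p α β ≤ transportCost d p π ^ (1 / p) := by
  unfold wassDist
  gcongr
  exact iInf_le (fun π : {π : Measure (Y × Y) // IsCoupling π α β} => transportCost d p π.1) ⟨π, h⟩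

lemma aux_cost_le {π : Measure (Y × Y)} {C : ℝ≥0∞} (hp : 1 ≤ p)
    (h : ∀ᵐ z ∂π, ENNReal.ofReal (d z.1 z.2) ≤ C) :
    transportCost d p π ≤ C ^ p * π univ := by
  rw [← lintegral_const]
  refine lintegral_mono_ae (h.mono fun z hz => ?_)
  gcongr

/-- the main coupling estimate -/
lemma aux_estimate (hp : 1 ≤ p) {n : ℕ} (A : Fin n → Set Y) (hA : ∀ i, MeasurableSet (A i))
    (hdisj : Pairwise (Function.onFun Disjoint A)) (hU : (⋃ i, A i) = univ)
    {C D : ℝ≥0∞} (hC : ∀ i, ∀ x ∈ A i, ∀ y ∈ A i, ENNReal.ofReal (d x y) ≤ C)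
    (hD : ∀ x y, ENNReal.ofReal (d x y) ≤ D)
    (μ ν : Measure Y) [IsProbabilityMeasure μ] [IsProbabilityMeasure ν] :
    wassDist d p μ ν ≤
      (C ^ p + D ^ p * (1 - ∑ i, min (μ (A i)) (ν (A i)))) ^ (1 / p) := by
  have key : ∀ (μ ν : Measure Y) [IsProbabilityMeasure μ] [IsProbabilityMeasure ν],
      ∃ (α : Fin n → Measure Y) (ρ : Measure Y), (∀ i, IsFiniteMeasure (α i)) ∧ 
        IsFiniteMeasure ρ ∧ (∀ i, α i univ = min (μ (A i)) (ν (A i))) ∧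
        (∀ i, α i (A i)ᶜ = 0) ∧ ρ + ∑ i, α i = μ := by
    intro μ ν _ _
    let α : Fin n → Measure Y := fun i =>
      (min (μ (A i)) (ν (A i)) / μ (A i)) • μ.restrict (A i)
    have hle1 : ∀ i, α i ≤ μ.restrict (A i) := by
      intro i
      refine Measure.le_iff.2 fun s _ => ?_
      simp only [α, Measure.smul_apply, smul_eq_mul]
      refine mul_le_of_le_one_left zero_le (ENNReal.div_le_of_le_mul ?_)
      simp
    have hle : ∑ i, α i ≤ μ := by
      calc ∑ i, α i ≤ ∑ i, μ.restrict (A i) := Finset.sum_le_sum fun i _ => hle1 i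
        _ = μ := by
          rw [← Measure.sum_fintype, ← Measure.restrict_iUnion hdisj hA, hU,
            Measure.restrict_univ]
    have hfin : ∀ i, IsFiniteMeasure (α i) := fun i => isFiniteMeasure_of_le _ (hle1 i)
    have hfin' : IsFiniteMeasure (∑ i, α i) := isFiniteMeasure_of_le _ hle
    refine ⟨α, μ - ∑ i, α i, hfin, isFiniteMeasure_of_le μ Measure.sub_le, fun i => ?_,
      fun i => ?_, Measure.sub_add_cancel_of_le hle⟩
    · simp only [α, Measure.smul_apply, smul_eq_mul, Measure.restrict_apply_univ]
      by_cases h0 : μ (A i) = 0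
      · simp [h0]
      · exact ENNReal.div_mul_cancel h0 (measure_ne_top _ _)
    · simp [α, Measure.restrict_apply (hA i).compl]
  obtain ⟨α, ρ, hα, hρ, hαm, hα0, hμ⟩ := key μ ν
  obtain ⟨β, τ, hβ, hτ, hβm, hβ0, hν⟩ := key ν μ
  have hαβ : ∀ i, α i univ = β i univ := fun i => by rw [hαm, hβm, min_comm]
  set m : ℝ≥0∞ := ∑ i, min (μ (A i)) (ν (A i)) with hm
  have hm1 : ρ univ + m = 1 := by
    have := congrArg (fun x : Measure Y => x univ) hμ
    simpa [Measure.add_apply, Measure.finset_sum_apply, hαm, ← hm] using this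
  have hm2 : τ univ + m = 1 := by
    have := congrArg (fun x : Measure Y => x univ) hν
    simpa [Measure.add_apply, Measure.finset_sum_apply, hβm, min_comm, ← hm] using this
  have hmtop : m ≠ ∞ := ne_top_of_le_ne_top ENNReal.one_ne_top (hm1 ▸ le_add_self)
  have hρ1 : ρ univ = 1 - m := ENNReal.eq_sub_of_add_eq hmtop hm1
  have hτ1 : τ univ = 1 - m := ENNReal.eq_sub_of_add_eq hmtop hm2
  let π : Fin n → Measure (Y × Y) := fun i => (α i univ)⁻¹ • (α i).prod (β i)
  let κ : Measure (Y × Y) := (ρ univ)⁻¹ • ρ.prod τ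
  have hπ : ∀ i, IsCoupling (π i) (α i) (β i) := fun i => aux_prod _ _ (hαβ i)
  have hκ : IsCoupling κ ρ τ := aux_prod _ _ (hρ1.trans hτ1.symm)
  have hcoup : IsCoupling (κ + ∑ i, π i) μ ν := by
    constructor
    · rw [Measure.map_add _ _ measurable_fst, hκ.1, ← Measure.sum_fintype,
        Measure.map_sum measurable_fst.aemeasurable]
      simp only [(hπ _).1]
      rw [Measure.sum_fintype, hμ]
    · rw [Measure.map_add _ _ measurable_snd, hκ.2, ← Measure.sum_fintype,
        Measure.map_sum measurable_snd.aemeasurable]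
      simp only [(hπ _).2]
      rw [Measure.sum_fintype, hν]
  refine (aux_wle hcoup hp).trans ?_
  gcongr
  have hsum : transportCost d p (κ + ∑ i, π i) =
      transportCost d p κ + ∑ i, transportCost d p (π i) := by
    simp only [transportCost, lintegral_add_measure, lintegral_finset_sum_measure]
  rw [hsum, add_comm]
  refine add_le_add ?_ ?_
  · calc ∑ i, transportCost d p (π i) ≤ ∑ i, C ^ p * min (μ (A i)) (ν (A i)) := by
          refine Finset.sum_le_sum fun i _ => ?_
          rw [← hαm, ← aux_coupling_univ (hπ i)]
          refine aux_cost_le hp ?_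
          have e1 : ∀ᵐ z ∂(π i), z.1 ∈ A i := by
            have : ∀ᵐ x ∂((π i).map Prod.fst), x ∈ A i := by rw [(hπ i).1]; exact hα0 i
            exact ae_of_ae_map measurable_fst.aemeasurable this
          have e2 : ∀ᵐ z ∂(π i), z.2 ∈ A i := by
            have : ∀ᵐ x ∂((π i).map Prod.snd), x ∈ A i := by rw [(hπ i).2]; exact hβ0 i
            exact ae_of_ae_map measurable_snd.aemeasurable this
          filter_upwards [e1, e2] with z h1 h2 using hC i _ h1 _ h2
      _ = C ^ p * m := by rw [hm, Finset.mul_sum]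
      _ ≤ C ^ p := mul_le_of_le_one_right zero_le (hm1 ▸ le_add_self)
  · rw [← hρ1, ← aux_coupling_univ hκ]
    exact aux_cost_le hp (Eventually.of_forall fun z => hD _ _)

lemma aux_tendsto (hp : 1 ≤ p) (hd : ∀ x y, d x y ≤ dist x y)
    (μ : ProbabilityMeasure Y) (u : ℕ → ProbabilityMeasure Y) (hu : Tendsto u atTop (𝓝 μ)) :
    Tendsto (fun k => wassDist d p (μ : Measure Y) (u k : Measure Y)) atTop (𝓝 0) := by
  have hp0 : 0 < p := by linarith
  rw [ENNReal.tendsto_nhds_zero]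
  intro ε hε
  obtain ⟨δ, hδ0, hδε⟩ : ∃ δ : ℝ, 0 < δ ∧ ENNReal.ofReal δ < ε := by
    rcases eq_or_ne ε ∞ with rfl | h
    · exact ⟨1, one_pos, ENNReal.ofReal_lt_top⟩
    · have := ENNReal.toReal_pos hε.ne' h
      refine ⟨ε.toReal / 2, by positivity, ?_⟩
      rw [ENNReal.ofReal_lt_iff_lt_toReal (by positivity) h]
      linarith
  obtain ⟨n, A, hA, hdisj, hU, hdiam, hfr⟩ := aux_partition (μ : Measure Y) hδ0
  set D : ℝ≥0∞ := ENNReal.ofReal (Metric.diam (univ : Set Y)) with hDdef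
  have hD : ∀ x y, ENNReal.ofReal (d x y) ≤ D := fun x y =>
    ENNReal.ofReal_le_ofReal ((hd x y).trans
      (Metric.dist_le_diam_of_mem isCompact_univ.isBounded (mem_univ _) (mem_univ _)))
  have hC : ∀ i, ∀ x ∈ A i, ∀ y ∈ A i, ENNReal.ofReal (d x y) ≤ ENNReal.ofReal δ :=
    fun i x hx y hy => ENNReal.ofReal_le_ofReal ((hd x y).trans (hdiam i x hx y hy).le)
  have hest := fun k => aux_estimate hp A hA hdisj hU hC hD (μ : Measure Y) (u k : Measure Y)
  have hsum1 : ∑ i, (μ : Measure Y) (A i) = 1 := by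
    rw [← tsum_fintype (L := .unconditional _), ← measure_iUnion hdisj hA, hU, measure_univ]
  have hlim : Tendsto (fun k => (ENNReal.ofReal δ ^ p + D ^ p * (1 - ∑ i,
      min ((μ : Measure Y) (A i)) ((u k : Measure Y) (A i)))) ^ (1 / p)) atTop
      (𝓝 ((ENNReal.ofReal δ ^ p + D ^ p * (1 - ∑ i,
      min ((μ : Measure Y) (A i)) ((μ : Measure Y) (A i)))) ^ (1 / p))) := by
    refine (ENNReal.continuous_rpow_const.tendsto _).comp ?_
    refine tendsto_const_nhds.add (ENNReal.Tendsto.const_mul ?_ (Or.inr ?_))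
    · refine ENNReal.Tendsto.sub tendsto_const_nhds (tendsto_finset_sum _ fun i _ => ?_)
        (Or.inl ENNReal.one_ne_top)
      exact tendsto_const_nhds.min
        (ProbabilityMeasure.tendsto_measure_of_null_frontier_of_tendsto' hu (hfr i))
    · exact ENNReal.rpow_ne_top_of_nonneg hp0.le ENNReal.ofReal_ne_top
  have hval : (ENNReal.ofReal δ ^ p + D ^ p * (1 - ∑ i,
      min ((μ : Measure Y) (A i)) ((μ : Measure Y) (A i)))) ^ (1 / p) = ENNReal.ofReal δ := by
    simp only [min_self, hsum1, tsub_self, mul_zero, add_zero]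
    rw [← ENNReal.rpow_mul, mul_one_div_cancel hp0.ne', ENNReal.rpow_one]
  rw [hval] at hlim
  filter_upwards [hlim.eventually (gt_mem_nhds hδε)] with k hk
  exact (hest k).trans hk.le

lemma aux_eq (hp : 1 ≤ p) (hc : Continuous fun z : Y × Y => d z.1 z.2) {θ : ℝ} (hθ : 1 ≤ θ)
    (hd : ∀ x y, dist x y ≤ θ * d x y)
    (μ ν : Measure Y) [IsProbabilityMeasure μ] [IsProbabilityMeasure ν]
    (h : wassDist d p μ ν = 0) : μ = ν := by
  have hp0 : 0 < p := by linarith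
  have hinf : (⨅ π : {π : Measure (Y × Y) // IsCoupling π μ ν}, transportCost d p π.1) = 0 := by
    unfold wassDist at h
    rw [ENNReal.rpow_eq_zero_iff] at h
    rcases h with h | h
    · exact h.1
    · have := one_div_pos.2 hp0
      linarith [h.2]
  have hLP : levyProkhorovEDist μ ν = 0 := by
    refine le_antisymm (levyProkhorovEDist_le_of_forall_le μ ν 0 fun ε B hε hεt hB => ?_)
      zero_le
    have hεr := ENNReal.toReal_pos hε.ne' hεt.ne
    set c : ℝ≥0∞ := ENNReal.ofReal (ε.toReal / θ) ^ p with hcdef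
    have hc0 : c ≠ 0 := by
      rw [hcdef]
      simp only [ne_eq, ENNReal.rpow_eq_zero_iff, not_or, not_and, ENNReal.ofReal_eq_zero, not_le]
      refine ⟨fun h => absurd h (by simp; positivity), fun h => absurd h ENNReal.ofReal_ne_top⟩
    have hct : c ≠ ∞ := ENNReal.rpow_ne_top_of_nonneg hp0.le ENNReal.ofReal_ne_top
    have : (⨅ π : {π : Measure (Y × Y) // IsCoupling π μ ν}, transportCost d p π.1) < ε * c := by
      rw [hinf]; exact ENNReal.mul_pos hε.ne' hc0
    obtain ⟨⟨π, hπ⟩, hπc⟩ := iInf_lt_iff.1 this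
    have hmark : π {z | c ≤ ENNReal.ofReal (d z.1 z.2) ^ p} ≤ ε := by
      refine (meas_ge_le_lintegral_div (aux_meas hc).aemeasurable hc0 hct).trans ?_
      exact ENNReal.div_le_of_le_mul hπc.le
    have hopen := (Metric.isOpen_thickening (δ := ε.toReal) (E := B)).measurableSet
    calc μ B = π (Prod.fst ⁻¹' B) := by rw [← hπ.1, Measure.map_apply measurable_fst hB]
      _ ≤ π (Prod.snd ⁻¹' (Metric.thickening ε.toReal B) ∪
            {z | c ≤ ENNReal.ofReal (d z.1 z.2) ^ p}) := by
          refine measure_mono fun z hz => ?_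
          by_cases hz2 : dist z.1 z.2 < ε.toReal
          · left
            exact Metric.mem_thickening_iff.2 ⟨z.1, hz, by rwa [dist_comm]⟩
          · right
            show c ≤ ENNReal.ofReal (d z.1 z.2) ^ p
            rw [hcdef]
            gcongr
            rw [div_le_iff₀ (by linarith), mul_comm]
            exact (not_lt.1 hz2).trans (hd _ _)
      _ ≤ π (Prod.snd ⁻¹' (Metric.thickening ε.toReal B)) + ε :=
          (measure_union_le _ _).trans (by gcongr)
      _ = ν (Metric.thickening ε.toReal B) + ε := by
          rw [← hπ.2, Measure.map_apply measurable_snd hopen]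
  refine ext_of_generate_finite _ ?_ isPiSystem_isClosed (fun A hA ↦ ?_) (by simp)
  · rw [BorelSpace.measurable_eq (α := Y), borel_eq_generateFrom_isClosed]
  · exact measure_eq_measure_of_levyProkhorovEDist_eq_zero_of_isClosed hLP hA
      ⟨1, Real.zero_lt_one, measure_ne_top _ _⟩ ⟨1, Real.zero_lt_one, measure_ne_top _ _⟩

open ProbabilityTheory in
lemma aux_glue (hp : 1 ≤ p) (hc : Continuous fun z : Y × Y => d z.1 z.2)
    (hd : IsIrrevMetric d) {π₁ π₂ : Measure (Y × Y)} {μ σ ν : Measure Y}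
    [IsProbabilityMeasure μ] [IsProbabilityMeasure σ]
    (h₁ : IsCoupling π₁ μ σ) (h₂ : IsCoupling π₂ σ ν) :
    wassDist d p μ ν ≤ transportCost d p π₁ ^ (1 / p) + transportCost d p π₂ ^ (1 / p) := by
  have hY : Nonempty Y := by
    by_contra hne
    rw [not_nonempty_iff] at hne
    have h1 : σ univ = 1 := measure_univ
    rw [univ_eq_empty_iff.2 hne, measure_empty] at h1
    exact zero_ne_one h1
  have hsw : Measurable (Prod.swap : Y × Y → Y × Y) := measurable_swap
  have f1 : IsFiniteMeasure π₁ := ⟨by rw [aux_coupling_univ h₁]; exact measure_lt_top _ _⟩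
  have f2 : IsFiniteMeasure π₂ := ⟨by rw [aux_coupling_univ h₂]; exact measure_lt_top _ _⟩
  set π₁' : Measure (Y × Y) := π₁.map Prod.swap with hπ₁'
  have hs : π₁'.map Prod.swap = π₁ := by
    rw [hπ₁', Measure.map_map hsw hsw, Prod.swap_swap_eq, Measure.map_id]
  have hf1 : π₁'.fst = σ := by
    rw [Measure.fst, hπ₁', Measure.map_map measurable_fst hsw]
    exact h₁.2
  have hf2 : π₂.fst = σ := h₂.1
  have d1 : σ ⊗ₘ π₁'.condKernel = π₁' := by
    conv_lhs => rw [← hf1]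
    exact Measure.disintegrate _ _
  have d2 : σ ⊗ₘ π₂.condKernel = π₂ := by
    conv_lhs => rw [← hf2]
    exact Measure.disintegrate _ _
  set κ₁ := π₁'.condKernel
  set κ₂ := π₂.condKernel
  set Γ : Measure (Y × (Y × Y)) := σ ⊗ₘ (κ₁ ×ₖ κ₂) with hΓ
  have g1 : Γ.map (Prod.map id Prod.fst) = π₁' := by
    rw [hΓ, ← Measure.compProd_map measurable_fst, ← Kernel.fst_eq, Kernel.fst_prod, d1]
  have g2 : Γ.map (Prod.map id Prod.snd) = π₂ := by
    rw [hΓ, ← Measure.compProd_map measurable_snd, ← Kernel.snd_eq, Kernel.snd_prod, d2]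
  have m1 : Measurable (fun w : Y × (Y × Y) => (w.2.1, w.1)) := by fun_prop
  have m2 : Measurable (fun w : Y × (Y × Y) => (w.1, w.2.2)) := by fun_prop
  have m3 : Measurable (fun w : Y × (Y × Y) => w.2) := by fun_prop
  have g1' : Γ.map (fun w => (w.2.1, w.1)) = π₁ := by
    rw [← hs, ← g1, Measure.map_map hsw (by fun_prop)]
    rfl
  have g2' : Γ.map (fun w => (w.1, w.2.2)) = π₂ := by
    rw [← g2]
    rfl
  have hcoup : IsCoupling (Γ.map Prod.snd) μ ν := by
    constructor
    · rw [Measure.map_map measurable_fst measurable_snd, ← h₁.1, ← g1',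
        Measure.map_map measurable_fst m1]
      rfl
    · rw [Measure.map_map measurable_snd measurable_snd, ← h₂.2, ← g2',
        Measure.map_map measurable_snd m2]
      rfl
  refine (aux_wle hcoup hp).trans ?_
  have hdm : Measurable fun z : Y × Y => ENNReal.ofReal (d z.1 z.2) := hc.measurable.ennreal_ofReal
  have c1 : transportCost d p π₁ = ∫⁻ w, ENNReal.ofReal (d w.2.1 w.1) ^ p ∂Γ := by
    rw [← g1', transportCost, lintegral_map (aux_meas hc) m1]
  have c2 : transportCost d p π₂ = ∫⁻ w, ENNReal.ofReal (d w.1 w.2.2) ^ p ∂Γ := by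
    rw [← g2', transportCost, lintegral_map (aux_meas hc) m2]
  have c3 : transportCost d p (Γ.map Prod.snd) = ∫⁻ w, ENNReal.ofReal (d w.2.1 w.2.2) ^ p ∂Γ := by
    rw [transportCost, lintegral_map (aux_meas hc) measurable_snd]
  rw [c1, c2, c3]
  refine le_trans ?_ (ENNReal.lintegral_Lp_add_le (μ := Γ)
    (f := fun w => ENNReal.ofReal (d w.2.1 w.1)) (g := fun w => ENNReal.ofReal (d w.1 w.2.2))
    (hdm.comp m1).aemeasurable (hdm.comp m2).aemeasurable hp)
  gcongr with w
  simp only [Pi.add_apply]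
  rw [← ENNReal.ofReal_add (hd.1 _ _) (hd.1 _ _)]
  exact ENNReal.ofReal_le_ofReal (hd.2.2 _ _ _)

lemma aux_rpow_iInf {ι : Sort*} (f : ι → ℝ≥0∞) {q : ℝ} (hq : 0 < q) :
    (⨅ i, f i) ^ q = ⨅ i, f i ^ q := by
  exact (ENNReal.orderIsoRpow q hq).map_iInf f

lemma aux_main (hp : 1 ≤ p) (hc : Continuous fun z : Y × Y => d z.1 z.2) {θ : ℝ} (hθ : 1 ≤ θ)
    (hdi : IsIrrevMetric d) (hrev : ∀ x y, d x y ≤ θ * d y x)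
    (hd1 : ∀ x y, d x y ≤ dist x y)
    (hd2 : ∀ x y, dist x y ≤ θ * d x y) :
    (∀ μ ν : Measure Y, IsProbabilityMeasure μ → IsProbabilityMeasure ν →
      (wassDist d p μ ν = 0 ↔ μ = ν)) ∧
    (∀ μ σ ν : Measure Y, IsProbabilityMeasure μ → IsProbabilityMeasure σ →
      IsProbabilityMeasure ν →
      wassDist d p μ ν ≤ wassDist d p μ σ + wassDist d p σ ν) ∧
    (∀ μ ν : Measure Y, IsProbabilityMeasure μ → IsProbabilityMeasure ν →
      wassDist d p μ ν ≤ ENNReal.ofReal θ * wassDist d p ν μ) ∧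
    (∀ u : ℕ → Measure Y, (∀ k, IsProbabilityMeasure (u k)) →
      ∃ (μ : Measure Y) (φ : ℕ → ℕ), IsProbabilityMeasure μ ∧ StrictMono φ ∧
        Tendsto (fun k => wassDist d p μ (u (φ k))) atTop (nhds 0)) ∧
    ((⨆ (μ : ProbabilityMeasure Y) (ν : ProbabilityMeasure Y),
        wassDist d p (μ : Measure Y) (ν : Measure Y)) =
      ⨆ (x : Y) (y : Y), ENNReal.ofReal (d x y)) ∧
    (∀ x y : Y, wassDist d p (Measure.dirac x) (Measure.dirac y) = ENNReal.ofReal (d x y)) := by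
  have hp0 : 0 < p := by linarith
  have hp1 : 0 < 1 / p := by positivity
  have hinv : ∀ a : ℝ≥0∞, (a ^ p) ^ (1 / p) = a := fun a => by
    rw [← ENNReal.rpow_mul, mul_one_div_cancel hp0.ne', ENNReal.rpow_one]
  have hdirac : ∀ x y : Y, wassDist d p (Measure.dirac x) (Measure.dirac y) =
      ENNReal.ofReal (d x y) := by
    intro x y
    have hcost : ∀ π : {π : Measure (Y × Y) // IsCoupling π (Measure.dirac x) (Measure.dirac y)},
        transportCost d p π.1 = ENNReal.ofReal (d x y) ^ p := by
      rintro ⟨π, hπ⟩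
      have e1 : ∀ᵐ z ∂π, z.1 = x := by
        have : ∀ᵐ a ∂(π.map Prod.fst), a = x := by
          rw [hπ.1, ae_dirac_eq]; simp
        exact ae_of_ae_map measurable_fst.aemeasurable this
      have e2 : ∀ᵐ z ∂π, z.2 = y := by
        have : ∀ᵐ a ∂(π.map Prod.snd), a = y := by
          rw [hπ.2, ae_dirac_eq]; simp
        exact ae_of_ae_map measurable_snd.aemeasurable this
      have : transportCost d p π = ∫⁻ _, ENNReal.ofReal (d x y) ^ p ∂π := by
        refine lintegral_congr_ae ?_
        filter_upwards [e1, e2] with z h1 h2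
        rw [h1, h2]
      simp only [this, lintegral_const, aux_coupling_univ hπ, measure_univ, mul_one]
    have : Nonempty {π : Measure (Y × Y) // IsCoupling π (Measure.dirac x) (Measure.dirac y)} :=
      ⟨⟨_, aux_prod (Measure.dirac x) (Measure.dirac y) (by simp)⟩⟩
    unfold wassDist
    simp only [hcost, iInf_const, hinv]
  refine ⟨fun μ ν hμ hν => ⟨fun h => aux_eq hp hc hθ hd2 μ ν h, ?_⟩, ?_, ?_, ?_, ?_, hdirac⟩
  · rintro rfl
    have hm : Measurable fun x : Y => (x, x) := by fun_prop
    have hcp : IsCoupling (μ.map fun x => (x, x)) μ μ := by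
      constructor
      · rw [Measure.map_map measurable_fst hm]; exact Measure.map_id
      · rw [Measure.map_map measurable_snd hm]; exact Measure.map_id
    refine le_antisymm ((aux_wle hcp hp).trans ?_) zero_le
    rw [transportCost, lintegral_map (aux_meas hc) hm]
    simp [(hdi.2.1 _ _).2 rfl, hp0]
  · intro μ σ ν _ _ _
    conv_rhs => unfold wassDist
    rw [aux_rpow_iInf _ hp1, aux_rpow_iInf _ hp1]
    exact ENNReal.le_iInf_add_iInf fun π₁ π₂ => aux_glue hp hc hdi π₁.2 π₂.2
  · intro μ ν _ _
    conv_rhs => unfold wassDist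
    rw [aux_rpow_iInf _ hp1, ENNReal.mul_iInf_of_ne (by simp; linarith) ENNReal.ofReal_ne_top]
    refine le_iInf fun π => ?_
    have hcp : IsCoupling (π.1.map Prod.swap) μ ν := by
      constructor
      · rw [Measure.map_map measurable_fst measurable_swap]; exact π.2.2
      · rw [Measure.map_map measurable_snd measurable_swap]; exact π.2.1
    refine (aux_wle hcp hp).trans ?_
    rw [transportCost, lintegral_map (aux_meas hc) measurable_swap]
    calc (∫⁻ z, ENNReal.ofReal (d z.swap.1 z.swap.2) ^ p ∂π.1) ^ (1 / p)
        ≤ (∫⁻ z, ENNReal.ofReal θ ^ p * ENNReal.ofReal (d z.1 z.2) ^ p ∂π.1) ^ (1 / p) := by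
          gcongr with z
          rw [← ENNReal.mul_rpow_of_nonneg _ _ hp0.le, ← ENNReal.ofReal_mul (by linarith)]
          gcongr
          exact hrev _ _
      _ = ENNReal.ofReal θ * transportCost d p π.1 ^ (1 / p) := by
          rw [lintegral_const_mul _ (aux_meas hc), ENNReal.mul_rpow_of_nonneg _ _ hp1.le, hinv]
          rfl
  · intro u hu
    let v : ℕ → ProbabilityMeasure Y := fun k => ⟨u k, hu k⟩
    obtain ⟨μ, φ, hφ, hlim⟩ := CompactSpace.tendsto_subseq v
    have h1 := aux_tendsto (d := d) (p := p) hp hd1 μ (v ∘ φ) hlim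
    have h2 : IsProbabilityMeasure (μ : Measure Y) := μ.2
    exact ⟨(μ : Measure Y), φ, h2, hφ, h1⟩
  · refine le_antisymm (iSup_le fun μ => iSup_le fun ν => ?_) (iSup_le fun x => iSup_le fun y => ?_)
    · refine (aux_wle (aux_prod (μ : Measure Y) (ν : Measure Y) (by simp)) hp).trans ?_
      have hcp := aux_prod (μ : Measure Y) (ν : Measure Y) (by simp)
      have := aux_cost_le (d := d) (π := (((μ : Measure Y) univ)⁻¹ •
        (μ : Measure Y).prod (ν : Measure Y))) hp
        (Eventually.of_forall fun z => le_iSup₂ (f := fun x y => ENNReal.ofReal (d x y)) z.1 z.2)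
      rw [aux_coupling_univ hcp, measure_univ, mul_one] at this
      calc _ ≤ _ := ENNReal.rpow_le_rpow (by simpa using this) hp1.le
        _ = _ := hinv _
    · rw [← hdirac x y]
      exact le_iSup₂ (f := fun (μ : ProbabilityMeasure Y) (ν : ProbabilityMeasure Y) =>
        wassDist d p (μ : Measure Y) (ν : Measure Y))
        ⟨Measure.dirac x, inferInstance⟩ ⟨Measure.dirac y, inferInstance⟩

end Aux

/-- the symmetrized metric -/
@[reducible] noncomputable def symMetric {Y : Type*} (d : Y → Y → ℝ) (hd : IsIrrevMetric d) :
    MetricSpace Y where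
  dist x y := max (d x y) (d y x)
  dist_self x := by simp [(hd.2.1 x x).2 rfl]
  dist_comm x y := max_comm _ _
  dist_triangle x y z := by
    refine max_le ((hd.2.2 x y z).trans ?_) ((hd.2.2 z y x).trans ?_)
    · exact add_le_add (le_max_left _ _) (le_max_left _ _)
    · rw [add_comm]
      exact add_le_add (le_max_right _ _) (le_max_right _ _)
  eq_of_dist_eq_zero {x y} h := by
    refine (hd.2.1 x y).1 (le_antisymm ?_ (hd.1 x y))
    exact (le_max_left _ _).trans h.le

lemma symMetric_top {Y : Type*} (d : Y → Y → ℝ) (hd : IsIrrevMetric d) {θ : ℝ} (hθ : 1 ≤ θ)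
    (hrev : ∀ x y, d x y ≤ θ * d y x) :
    (symMetric d hd).toUniformSpace.toTopologicalSpace = fwdTop d := by
  letI := symMetric d hd
  have hdist : ∀ x y : Y, dist x y = max (d x y) (d y x) := fun _ _ => rfl
  refine le_antisymm ?_ ?_
  · refine le_generateFrom ?_
    rintro s ⟨x, r, rfl⟩
    refine Metric.isOpen_iff.2 fun y hy => ⟨r - d x y, sub_pos.2 hy, fun z hz => ?_⟩
    rw [Metric.mem_ball, hdist] at hz
    have h1 := (le_max_right (d z y) (d y z)).trans_lt hz
    have h2 := hd.2.2 x y z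
    show d x z < r
    linarith
  · intro s hs
    rw [@isOpen_iff_mem_nhds _ (fwdTop d)]
    intro x hx
    obtain ⟨r, hr, hrs⟩ := Metric.isOpen_iff.1 hs x hx
    have hθ0 : 0 < θ := by linarith
    refine mem_of_superset (@IsOpen.mem_nhds _ (fwdTop d) x (fwdBall d x (r / θ))
      (TopologicalSpace.isOpen_generateFrom_of_mem ⟨x, r / θ, rfl⟩) ?_) fun y hy => hrs ?_
    · show d x x < r / θ
      rw [(hd.2.1 x x).2 rfl]
      positivity
    · have hy : d x y < r / θ := hy
      rw [lt_div_iff₀ hθ0] at hy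
      rw [Metric.mem_ball, hdist]
      have h1 := hrev y x
      have h2 : d x y ≤ d x y * θ := le_mul_of_one_le_right (hd.1 _ _) hθ
      exact max_lt (by linarith) (by linarith)

/-- Let `(X,d)` be a compact θ-metric space. Then for every `p ∈ [1,∞)` the
Wasserstein space `(P(X), W_p)` is a compact θ-metric space (nonnegativity is automatic; `W_p`
vanishes exactly on the diagonal, satisfies the triangle inequality, has reversibility ≤ θ,
and the space of probability measures is sequentially compact for `W_p`), with
`diam (P(X), W_p) = diam (X,d)`, and `x ↦ δ_x` is an isometric embedding. -/
theorem stmt15 [mX : MeasurableSpace X] (d : X → X → ℝ) (hd : IsIrrevMetric d)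
    (θ : ℝ) (hθ : 1 ≤ θ) (hrev : ∀ x y, d x y ≤ θ * d y x)
    (hmX : mX = @borel X (fwdTop d))
    (hcpt : @CompactSpace X (fwdTop d))
    (p : ℝ) (hp : 1 ≤ p) :
    (∀ μ ν : Measure X, IsProbabilityMeasure μ → IsProbabilityMeasure ν →
      (wassDist d p μ ν = 0 ↔ μ = ν)) ∧
    (∀ μ σ ν : Measure X, IsProbabilityMeasure μ → IsProbabilityMeasure σ →
      IsProbabilityMeasure ν →
      wassDist d p μ ν ≤ wassDist d p μ σ + wassDist d p σ ν) ∧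
    (∀ μ ν : Measure X, IsProbabilityMeasure μ → IsProbabilityMeasure ν →
      wassDist d p μ ν ≤ ENNReal.ofReal θ * wassDist d p ν μ) ∧
    (∀ u : ℕ → Measure X, (∀ k, IsProbabilityMeasure (u k)) →
      ∃ (μ : Measure X) (φ : ℕ → ℕ), IsProbabilityMeasure μ ∧ StrictMono φ ∧
        Tendsto (fun k => wassDist d p μ (u (φ k))) atTop (nhds 0)) ∧
    ((⨆ (μ : ProbabilityMeasure X) (ν : ProbabilityMeasure X),
        wassDist d p (μ : Measure X) (ν : Measure X)) =
      ⨆ (x : X) (y : X), ENNReal.ofReal (d x y)) ∧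
    (∀ x y : X, wassDist d p (Measure.dirac x) (Measure.dirac y) = ENNReal.ofReal (d x y)) := by
  letI mm : MetricSpace X := symMetric d hd
  have htop : mm.toUniformSpace.toTopologicalSpace = fwdTop d := symMetric_top d hd hθ hrev
  have hdist : ∀ x y : X, dist x y = max (d x y) (d y x) := fun _ _ => rfl
  haveI : CompactSpace X := by rw [← htop] at hcpt; exact hcpt
  haveI : BorelSpace X := ⟨by rw [hmX, ← htop]⟩
  have hd1 : ∀ x y, d x y ≤ dist x y := fun x y => le_max_left _ _
  have hd2 : ∀ x y, dist x y ≤ θ * d x y := fun x y => by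
    rw [hdist]
    exact max_le (le_mul_of_one_le_left (hd.1 _ _) hθ) (hrev y x)
  have hc : Continuous fun z : X × X => d z.1 z.2 := by
    refine (LipschitzWith.of_le_add_mul (K := 2) fun z w => ?_).continuous
    have h1 := hd.2.2 z.1 w.1 z.2
    have h2 := hd.2.2 w.1 w.2 z.2
    have h3 := (hd1 z.1 w.1).trans (le_max_left _ (dist z.2 w.2))
    have h4 := (hd1 w.2 z.2).trans ((dist_comm _ _).le.trans (le_max_right (dist z.1 w.1) _))
    rw [← Prod.dist_eq] at h3 h4
    push_cast
    linarith
  exact aux_main hp hc hθ hd hrev hd1 hd2
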